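/- For every positive integer m, the Minkowski dimension of A_m^* equals m/(m+1); equivalently, lim_{δ→0⁺} log λ(V_δ(A_m^*)) / log δ = 1/(m+1). -/

import Mathlib

open MeasureTheory Filter Set

/-- The closed `δ`-neighbourhood `V_δ(Ω) = {x : ∃ y ∈ Ω, |x - y| ≤ δ}`. -/
def closedNbhd (Ω : Set ℝ) (δ : ℝ) : Set ℝ := {x : ℝ | ∃ y ∈ Ω, |x - y| ≤ δ}

/-- One step of the Engel expansion algorithm: `x ↦ ⌈1/x⌉ · x - 1`. -/
noncomputable def engelStep (x : ℝ) : ℝ := (⌈1 / x⌉ : ℝ) * x - 1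

/-- The Engel algorithm iterates: `engelIter x i = x_{i+1}`, where `x₁ = x` and
`x_{i+1} = aᵢ xᵢ - 1` with `aᵢ = ⌈1/xᵢ⌉`. -/
noncomputable def engelIter (x : ℝ) (i : ℕ) : ℝ := engelStep^[i] x

/-- The Engel fraction of `x` has length `k`: the algorithm stays positive for the
first `k` steps and terminates with `x_{k+1} = 0`. -/
def engelLength (x : ℝ) (k : ℕ) : Prop :=
  (∀ i, i < k → 0 < engelIter x i) ∧ engelIter x k = 0

/-- `E_m^*`: the set of rationals `x ∈ (0,1]` whose Engel fraction has length `m`. -/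
def EstarSet (m : ℕ) : Set ℝ :=
  {x : ℝ | (∃ q : ℚ, (q : ℝ) = x) ∧ x ∈ Set.Ioc (0 : ℝ) 1 ∧ engelLength x m}

/-- `A_m^* = ⋃_{p=1}^m E_p^*`: rationals in `(0,1]` whose Engel fraction has
length at most `m`. -/
def AstarSet (m : ℕ) : Set ℝ :=
  {x : ℝ | (∃ q : ℚ, (q : ℝ) = x) ∧ x ∈ Set.Ioc (0 : ℝ) 1 ∧
    ∃ k, 1 ≤ k ∧ k ≤ m ∧ engelLength x k}

/-!
Write `δ = T ^ (-(m + 1))`; the measure of `V_δ(A_m^*)` is `1 / T` up to constants and a power of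
`log T`.

Upper bound: a point of `A_{n+1}^*` is either at most `1 / N` or has first digit `a ≤ N`, and then
the affine map `x ↦ a x - 1` sends it into `A_n^* ∪ {0}` and its `δ`-neighbourhood into an
`a δ`-neighbourhood. Hence `λ(V_δ(A_{n+1}^*)) ≤ 1 / N + 2 δ + ∑ a ≤ N, λ(V_{aδ}(A_n^* ∪ {0})) / a`,
and iterating gives `λ(V_δ(A_m^*)) ≲ (log N) ^ m / N + δ N ^ m`. Both terms balance at `N ≈ T`.

Lower bound: distinct Engel fractions of length `m` with digits at most `M` are at least
`M ^ (-(m + 1))` apart. For a small multiple `M` of `T` their `δ`-neighbourhoods are disjoint, and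
there are at least a constant times `M ^ m` of them, covering measure of order `δ T ^ m = 1 / T`.
-/

open Asymptotics
open scoped Topology

section ClosedNbhd

variable {S T : Set ℝ} {δ : ℝ}

theorem closedNbhd_eq_biUnion_closedBall (S : Set ℝ) (δ : ℝ) :
    closedNbhd S δ = ⋃ y ∈ S, Metric.closedBall y δ := by
  ext x
  simp [closedNbhd, Real.dist_eq]

theorem closedNbhd_mono (h : S ⊆ T) : closedNbhd S δ ⊆ closedNbhd T δ := by
  simpa only [closedNbhd_eq_biUnion_closedBall] using biUnion_subset_biUnion_left h

theorem closedNbhd_union (S T : Set ℝ) (δ : ℝ) :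
    closedNbhd (S ∪ T) δ = closedNbhd S δ ∪ closedNbhd T δ := by
  simp only [closedNbhd_eq_biUnion_closedBall, biUnion_union]

theorem closedNbhd_biUnion {ι : Type*} (s : Finset ι) (f : ι → Set ℝ) (δ : ℝ) :
    closedNbhd (⋃ i ∈ s, f i) δ = ⋃ i ∈ s, closedNbhd (f i) δ := by
  simp only [closedNbhd_eq_biUnion_closedBall, biUnion_iUnion]

theorem closedNbhd_preimage_affine_subset (a b : ℝ) (S : Set ℝ) (δ : ℝ) :
    closedNbhd ((fun x ↦ a * x - b) ⁻¹' S) δ ⊆ (fun x ↦ a * x - b) ⁻¹' closedNbhd S (|a| * δ) := by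
  rintro x ⟨y, hy, hxy⟩
  refine ⟨a * y - b, hy, ?_⟩
  calc |a * x - b - (a * y - b)| = |a| * |x - y| := by rw [← abs_mul]; ring_nf
    _ ≤ |a| * δ := by gcongr

theorem volume_closedNbhd_Icc_le (a b δ : ℝ) :
    volume (closedNbhd (Icc a b) δ) ≤ ENNReal.ofReal (b - a + 2 * δ) := by
  have hsub : closedNbhd (Icc a b) δ ⊆ Icc (a - δ) (b + δ) := by
    rintro x ⟨y, ⟨hay, hyb⟩, hxy⟩
    rw [abs_le] at hxy
    constructor <;> linarith
  calc volume (closedNbhd (Icc a b) δ) ≤ volume (Icc (a - δ) (b + δ)) := measure_mono hsub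
    _ = ENNReal.ofReal (b - a + 2 * δ) := by rw [Real.volume_Icc]; ring_nf

theorem volume_closedNbhd_preimage_affine_le {a : ℝ} (ha : a ≠ 0) (b : ℝ) (S : Set ℝ) (δ : ℝ) :
    volume (closedNbhd ((fun x ↦ a * x - b) ⁻¹' S) δ) ≤
      ENNReal.ofReal |a⁻¹| * volume (closedNbhd S (|a| * δ)) := by
  calc volume (closedNbhd ((fun x ↦ a * x - b) ⁻¹' S) δ)
      ≤ volume ((a * ·) ⁻¹' ((· + -b) ⁻¹' closedNbhd S (|a| * δ))) :=
        measure_mono (closedNbhd_preimage_affine_subset a b S δ)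
    _ = ENNReal.ofReal |a⁻¹| * volume (closedNbhd S (|a| * δ)) := by
        rw [Real.volume_preimage_mul_left ha, measure_preimage_add_right]

theorem card_mul_le_volume_closedNbhd {ι : Type*} {s : Finset ι} {f : ι → ℝ}
    (hmem : ∀ i ∈ s, f i ∈ S) (hsep : (s : Set ι).Pairwise fun i j ↦ 2 * δ < |f i - f j|) :
    s.card * ENNReal.ofReal (2 * δ) ≤ volume (closedNbhd S δ) := by
  have hdisj : (s : Set ι).PairwiseDisjoint fun i ↦ Metric.closedBall (f i) δ :=
    fun i hi j hj hij ↦ Metric.closedBall_disjoint_closedBall <| by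
      simpa only [Real.dist_eq, two_mul] using hsep hi hj hij
  calc s.card * ENNReal.ofReal (2 * δ) = ∑ i ∈ s, volume (Metric.closedBall (f i) δ) := by
        simp only [Real.volume_closedBall, Finset.sum_const, nsmul_eq_mul]
    _ = volume (⋃ i ∈ s, Metric.closedBall (f i) δ) :=
        (measure_biUnion_finset hdisj fun _ _ ↦ Metric.isClosed_closedBall.measurableSet).symm
    _ ≤ volume (closedNbhd S δ) := by
        rw [closedNbhd_eq_biUnion_closedBall]
        exact measure_mono <| iUnion₂_subset fun i hi ↦
          subset_biUnion_of_mem (u := fun y ↦ Metric.closedBall y δ) (hmem i hi)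

end ClosedNbhd

section EngelAlgorithm

variable {x : ℝ} {k n : ℕ}

theorem engelStep_eq_natCeil (hx : 0 ≤ x) : engelStep x = ⌈1 / x⌉₊ * x - 1 := by
  rw [engelStep, natCast_ceil_eq_intCast_ceil (one_div_nonneg.2 hx)]

theorem engelStep_lt_self (hx : 0 < x) : engelStep x < x := by
  have hceil : (⌈1 / x⌉ : ℝ) < 1 / x + 1 := Int.ceil_lt_add_one _
  calc engelStep x < (1 / x + 1) * x - 1 := by unfold engelStep; gcongr
    _ = x := by field_simp; ring

theorem engelLength_zero_iff : engelLength x 0 ↔ x = 0 := by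
  simp [engelLength, engelIter]

theorem engelLength_succ_iff : engelLength x (k + 1) ↔ 0 < x ∧ engelLength (engelStep x) k := by
  simp only [engelLength, engelIter, Nat.forall_lt_succ_left, Function.iterate_zero, id_eq,
    Function.iterate_succ_apply, and_assoc]

theorem AstarSet_zero : AstarSet 0 = ∅ := by
  ext x
  simp only [AstarSet, mem_ofPred_eq, mem_empty_iff_false, iff_false]
  rintro ⟨-, -, k, hk, hk', -⟩
  omega

theorem AstarSet_subset_Icc (m : ℕ) : AstarSet m ⊆ Icc 0 1 :=
  fun _ hx ↦ Ioc_subset_Icc_self hx.2.1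

theorem engelStep_mem_insert_zero_AstarSet (hx : x ∈ AstarSet (n + 1)) :
    engelStep x ∈ insert 0 (AstarSet n) := by
  obtain ⟨⟨q, rfl⟩, ⟨hpos, hle⟩, k, hk, hkn, hlen⟩ := hx
  obtain ⟨k, rfl⟩ := Nat.exists_eq_add_of_le' hk
  have hlen' := (engelLength_succ_iff.1 hlen).2
  cases k with
  | zero => exact Or.inl (engelLength_zero_iff.1 hlen')
  | succ k =>
    refine Or.inr ⟨⟨⌈1 / (q : ℝ)⌉ * q - 1, by simp [engelStep]⟩, ⟨?_, ?_⟩, k + 1, by omega,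
      by omega, hlen'⟩
    · exact (engelLength_succ_iff.1 hlen').1
    · exact (engelStep_lt_self hpos).le.trans hle

end EngelAlgorithm

section UpperBound

variable {m n N : ℕ} {δ T : ℝ}

theorem insert_zero_AstarSet_succ_subset (n : ℕ) (hN : N ≠ 0) :
    insert 0 (AstarSet (n + 1)) ⊆ Icc 0 (N : ℝ)⁻¹ ∪
      ⋃ a ∈ Finset.Icc 1 N, (fun x : ℝ ↦ a * x - 1) ⁻¹' insert 0 (AstarSet n) := by
  have hN' : (0 : ℝ) < N := by positivity
  rintro x (rfl | hx)
  · exact Or.inl ⟨le_rfl, by positivity⟩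
  have hpos : 0 < x := hx.2.1.1
  rcases le_or_gt x (N : ℝ)⁻¹ with hxN | hxN
  · exact Or.inl ⟨hpos.le, hxN⟩
  refine Or.inr (mem_iUnion₂.2 ⟨⌈1 / x⌉₊, Finset.mem_Icc.2 ⟨?_, ?_⟩, ?_⟩)
  · exact Nat.one_le_ceil_iff.2 (by positivity)
  · rw [Nat.ceil_le, one_div]
    exact (inv_lt_of_inv_lt₀ hN' hxN).le
  · rw [mem_preimage, ← engelStep_eq_natCeil hpos.le]
    exact engelStep_mem_insert_zero_AstarSet hx

theorem volume_closedNbhd_insert_zero_AstarSet_succ_le (n : ℕ) (hN : N ≠ 0) (δ : ℝ) :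
    volume (closedNbhd (insert 0 (AstarSet (n + 1))) δ) ≤
      ENNReal.ofReal ((N : ℝ)⁻¹ + 2 * δ) + ∑ a ∈ Finset.Icc 1 N,
        ENNReal.ofReal (a : ℝ)⁻¹ * volume (closedNbhd (insert 0 (AstarSet n)) (a * δ)) := by
  refine (measure_mono (closedNbhd_mono (insert_zero_AstarSet_succ_subset n hN))).trans ?_
  rw [closedNbhd_union, closedNbhd_biUnion]
  refine (measure_union_le _ _).trans (add_le_add ?_ ?_)
  · simpa only [sub_zero] using volume_closedNbhd_Icc_le 0 (N : ℝ)⁻¹ δ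
  · refine (measure_biUnion_finset_le _ _).trans (Finset.sum_le_sum fun a ha ↦ ?_)
    have ha' : (a : ℝ) ≠ 0 := by
      have := (Finset.mem_Icc.1 ha).1
      positivity
    simpa only [abs_inv, Nat.abs_cast] using
      volume_closedNbhd_preimage_affine_le ha' 1 (insert 0 (AstarSet n)) δ

theorem sum_inv_mul_add_mul_le {X : ℝ} (hX : 0 ≤ X) (Y : ℝ) (N : ℕ) :
    ∑ a ∈ Finset.Icc 1 N, (a : ℝ)⁻¹ * (X + a * Y) ≤ (1 + Real.log N) * X + N * Y := by
  have hharmonic : ∑ a ∈ Finset.Icc 1 N, (a : ℝ)⁻¹ ≤ 1 + Real.log N := by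
    simpa [harmonic_eq_sum_Icc] using harmonic_le_one_add_log N
  calc ∑ a ∈ Finset.Icc 1 N, (a : ℝ)⁻¹ * (X + a * Y)
      = ∑ a ∈ Finset.Icc 1 N, ((a : ℝ)⁻¹ * X + Y) := by
        refine Finset.sum_congr rfl fun a ha ↦ ?_
        have := (Finset.mem_Icc.1 ha).1
        field_simp
    _ = (∑ a ∈ Finset.Icc 1 N, (a : ℝ)⁻¹) * X + N * Y := by
        simp [Finset.sum_add_distrib, Finset.sum_mul]
    _ ≤ (1 + Real.log N) * X + N * Y := by gcongr

theorem volume_closedNbhd_insert_zero_AstarSet_le (hN : N ≠ 0) (n : ℕ) (hδ : 0 ≤ δ) :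
    volume (closedNbhd (insert 0 (AstarSet n)) δ) ≤
      ENNReal.ofReal (n * (1 + Real.log N) ^ n / N + 2 * (n + 1) * δ * N ^ n) := by
  have hN1 : (1 : ℝ) ≤ N := by exact_mod_cast Nat.one_le_iff_ne_zero.2 hN
  set W : ℝ := 1 + Real.log N
  have hW1 : 1 ≤ W := le_add_of_nonneg_right (Real.log_nonneg hN1)
  induction n generalizing δ with
  | zero => simpa [AstarSet_zero] using volume_closedNbhd_Icc_le 0 0 δ
  | succ n ih =>
    let X : ℝ := n * W ^ n / N
    let Y : ℝ := 2 * (n + 1) * δ * N ^ n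
    have hX : 0 ≤ X := by positivity
    have hterm (a : ℕ) : ENNReal.ofReal (a : ℝ)⁻¹ *
        volume (closedNbhd (insert 0 (AstarSet n)) (a * δ)) ≤
          ENNReal.ofReal ((a : ℝ)⁻¹ * (X + a * Y)) := by
      rw [ENNReal.ofReal_mul (by positivity)]
      gcongr
      exact (ih (by positivity)).trans_eq (by simp only [X, Y]; ring_nf)
    calc volume (closedNbhd (insert 0 (AstarSet (n + 1))) δ)
        ≤ ENNReal.ofReal ((N : ℝ)⁻¹ + 2 * δ) +
            ∑ a ∈ Finset.Icc 1 N, ENNReal.ofReal ((a : ℝ)⁻¹ * (X + a * Y)) :=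
          (volume_closedNbhd_insert_zero_AstarSet_succ_le n hN δ).trans <| by
            gcongr with a
            exact hterm a
      _ = ENNReal.ofReal ((N : ℝ)⁻¹ + 2 * δ +
            ∑ a ∈ Finset.Icc 1 N, (a : ℝ)⁻¹ * (X + a * Y)) := by
          rw [← ENNReal.ofReal_sum_of_nonneg fun _ _ ↦ by positivity,
            ← ENNReal.ofReal_add (by positivity) (by positivity)]
      _ ≤ ENNReal.ofReal (W ^ (n + 1) / N + 2 * δ * N ^ (n + 1) + (W * X + N * Y)) := by
          refine ENNReal.ofReal_le_ofReal (add_le_add (add_le_add ?_ ?_) ?_)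
          · rw [inv_eq_one_div]
            gcongr
            exact one_le_pow₀ hW1
          · exact le_mul_of_one_le_right (by positivity) (one_le_pow₀ hN1)
          · exact sum_inv_mul_add_mul_le hX Y N
      _ = _ := by simp only [X, Y]; push_cast; ring_nf

theorem volume_closedNbhd_AstarSet_ne_top (m : ℕ) (δ : ℝ) :
    volume (closedNbhd (AstarSet m) δ) ≠ ⊤ :=
  ((measure_mono (closedNbhd_mono (AstarSet_subset_Icc m))).trans_lt
    ((volume_closedNbhd_Icc_le 0 1 δ).trans_lt ENNReal.ofReal_lt_top)).ne

theorem log_natCeil_le_one_add_log (hT : 1 ≤ T) : Real.log ⌈T⌉₊ ≤ 1 + Real.log T := by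
  have hT0 : 0 < T := by positivity
  calc Real.log ⌈T⌉₊ ≤ Real.log (2 * T) :=
        Real.log_le_log (hT0.trans_le (Nat.le_ceil T)) (Nat.ceil_le_two_mul (by linarith))
    _ = Real.log 2 + Real.log T := Real.log_mul two_ne_zero hT0.ne'
    _ ≤ 1 + Real.log T := by linarith [Real.log_two_lt_d9]

theorem volume_closedNbhd_AstarSet_toReal_le (hT : 1 ≤ T) (hδ : δ * T ^ (m + 1) = 1) :
    (volume (closedNbhd (AstarSet m) δ)).toReal ≤
      (m + (m + 1) * 2 ^ (m + 1)) * (2 + Real.log T) ^ m * T⁻¹ := by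
  have hT0 : 0 < T := by positivity
  have hδ0 : 0 < δ := pos_of_mul_pos_left (hδ ▸ one_pos) (by positivity)
  have hTN : T ≤ ⌈T⌉₊ := Nat.le_ceil T
  have hN2T : (⌈T⌉₊ : ℝ) ≤ 2 * T := Nat.ceil_le_two_mul (by linarith)
  have hlogT : 0 ≤ Real.log T := Real.log_nonneg hT
  have hlogN : 1 + Real.log ⌈T⌉₊ ≤ 2 + Real.log T := by linarith [log_natCeil_le_one_add_log hT]
  have : 0 ≤ Real.log ⌈T⌉₊ := Real.log_nonneg (hT.trans hTN)
  have hδT : δ * T ^ m = T⁻¹ :=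
    eq_inv_of_mul_eq_one_left (by rw [mul_assoc, ← pow_succ, hδ])
  have hfst : m * (1 + Real.log ⌈T⌉₊) ^ m / ⌈T⌉₊ ≤ m * (2 + Real.log T) ^ m * T⁻¹ := by
    rw [← div_eq_mul_inv]
    gcongr
  have hsnd : 2 * (m + 1) * δ * (⌈T⌉₊ : ℝ) ^ m ≤
      (m + 1) * 2 ^ (m + 1) * (2 + Real.log T) ^ m * T⁻¹ :=
    calc 2 * (m + 1) * δ * (⌈T⌉₊ : ℝ) ^ m ≤ 2 * (m + 1) * δ * (2 * T) ^ m := by gcongr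
      _ = (m + 1) * 2 ^ (m + 1) * 1 * T⁻¹ := by rw [← hδT]; ring
      _ ≤ _ := by gcongr; exact one_le_pow₀ (by linarith)
  refine ENNReal.toReal_le_of_le_ofReal (by positivity) ?_
  calc volume (closedNbhd (AstarSet m) δ)
      ≤ volume (closedNbhd (insert 0 (AstarSet m)) δ) :=
        measure_mono (closedNbhd_mono (subset_insert _ _))
    _ ≤ _ := volume_closedNbhd_insert_zero_AstarSet_le (Nat.ceil_pos.2 hT0).ne' m hδ0.le
    _ ≤ _ := ENNReal.ofReal_le_ofReal ((add_le_add hfst hsnd).trans_eq (by ring))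

end UpperBound

/-- The Engel sum `∑ i, 1 / (a₁ a₂ ⋯ aᵢ)` of a list of digits, in Horner form. It is the Engel
fraction with those digits when they are positive and nondecreasing. -/
def engelSum : List ℕ → ℚ
  | [] => 0
  | a :: l => (1 + engelSum l) / a

section EngelSum

variable {a b m M : ℕ} {l l' : List ℕ}

theorem engelSum_cons (a : ℕ) (l : List ℕ) : engelSum (a :: l) = (1 + engelSum l) / a := rfl

theorem engelSum_nonneg : ∀ l : List ℕ, 0 ≤ engelSum l
  | [] => le_rfl
  | _ :: l => div_nonneg (add_nonneg zero_le_one (engelSum_nonneg l)) (Nat.cast_nonneg _)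

theorem one_div_le_engelSum_cons (a : ℕ) (l : List ℕ) : 1 / (a : ℚ) ≤ engelSum (a :: l) := by
  rw [engelSum_cons]
  gcongr
  exact le_add_of_nonneg_right (engelSum_nonneg l)

theorem engelSum_mul_sub_one_lt_one (ha : 1 ≤ a) (hl : ∀ b ∈ l, a ≤ b) :
    engelSum l * (a - 1) < 1 := by
  have ha' : (1 : ℚ) ≤ a := by exact_mod_cast ha
  induction l with
  | nil => simp [engelSum]
  | cons b l ih =>
    rw [List.forall_mem_cons] at hl
    have hab : (a : ℚ) ≤ b := by exact_mod_cast hl.1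
    rw [engelSum_cons, div_mul_eq_mul_div, div_lt_one (by linarith)]
    linarith [ih hl.2]

theorem engelStep_engelSum_cons (ha : 1 ≤ a) (hl : ∀ b ∈ l, a ≤ b) :
    engelStep (engelSum (a :: l)) = engelSum l := by
  have ha' : (0 : ℚ) < a := by exact_mod_cast ha
  have hpos : 0 < 1 + engelSum l := by linarith [engelSum_nonneg l]
  have hceil : ⌈1 / engelSum (a :: l)⌉ = a := by
    rw [engelSum_cons, one_div_div, Int.ceil_eq_iff, lt_div_iff₀ hpos, div_le_iff₀ hpos,
      Int.cast_natCast]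
    constructor
    · linarith [engelSum_mul_sub_one_lt_one ha hl]
    · exact le_mul_of_one_le_right ha'.le (le_add_of_nonneg_right (engelSum_nonneg l))
  have hstep : (⌈1 / engelSum (a :: l)⌉ : ℚ) * engelSum (a :: l) - 1 = engelSum l := by
    rw [hceil, engelSum_cons, Int.cast_natCast]
    field_simp
    ring
  rw [← hstep, engelStep, ← Rat.ceil_cast (α := ℝ)]
  push_cast
  rfl

theorem engelLength_engelSum (hsort : l.Pairwise (· ≤ ·)) (hpos : ∀ a ∈ l, 1 ≤ a) :
    engelLength (engelSum l) l.length := by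
  induction l with
  | nil => simp [engelLength_zero_iff, engelSum]
  | cons a l ih =>
    rw [List.pairwise_cons] at hsort
    rw [List.forall_mem_cons] at hpos
    have ha : (0 : ℚ) < a := by exact_mod_cast hpos.1
    rw [List.length_cons, engelLength_succ_iff, engelStep_engelSum_cons hpos.1 hsort.1]
    refine ⟨?_, ih hsort.2 hpos.2⟩
    exact_mod_cast (one_div_pos.2 ha).trans_le (one_div_le_engelSum_cons a l)

theorem engelSum_mem_AstarSet (hl : l ≠ []) (hsort : l.Pairwise (· ≤ ·)) (htwo : ∀ a ∈ l, 2 ≤ a)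
    (hlen : l.length ≤ m) : (engelSum l : ℝ) ∈ AstarSet m := by
  have hlength := engelLength_engelSum hsort fun a ha ↦ one_le_two.trans (htwo a ha)
  have hlen_pos : 0 < l.length := List.length_pos_iff.2 hl
  refine ⟨⟨_, rfl⟩, ⟨hlength.1 0 hlen_pos, ?_⟩, _, hlen_pos, hlen, hlength⟩
  have hlt := engelSum_mul_sub_one_lt_one one_le_two htwo
  norm_num at hlt
  exact_mod_cast hlt.le

theorem engelSum_cons_lt_one_div (ha : 1 ≤ a) (hab : a < b) (hl : ∀ c ∈ l, b ≤ c) :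
    engelSum (b :: l) < 1 / a := by
  have ha' : (0 : ℚ) < a := by exact_mod_cast ha
  have hab' : (a : ℚ) ≤ b - 1 := by
    rw [le_sub_iff_add_le]
    exact_mod_cast hab
  rw [lt_div_iff₀ ha']
  calc engelSum (b :: l) * a ≤ engelSum (b :: l) * (b - 1) := by
        gcongr
        exact engelSum_nonneg _
    _ < 1 := engelSum_mul_sub_one_lt_one (ha.trans hab.le) (by simpa using hl)

-- `1 / a` lies between the two sums: the second one is smaller, and if `l` is nonempty its first
-- term puts the first one at least `1 / (a * M)` above.
theorem inv_sq_le_engelSum_cons_sub (ha : 1 ≤ a) (hab : a < b) (hbM : b ≤ M)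
    (hl : ∀ c ∈ l, 1 ≤ c ∧ c ≤ M) (hl' : ∀ c ∈ l', b ≤ c) (hlen : l.length = l'.length) :
    1 / (M : ℚ) ^ 2 ≤ engelSum (a :: l) - engelSum (b :: l') := by
  have ha' : (0 : ℚ) < a := by exact_mod_cast ha
  have hab' : (a : ℚ) + 1 ≤ b := by exact_mod_cast hab
  have hbM' : (b : ℚ) ≤ M := by exact_mod_cast hbM
  cases l with
  | nil =>
    obtain rfl : l' = [] := List.length_eq_zero_iff.1 hlen.symm
    calc 1 / (M : ℚ) ^ 2 ≤ (b - a) / (a * b) := by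
          have : 0 < (b : ℚ) := by linarith
          rw [sq]
          gcongr <;> linarith
      _ = engelSum [a] - engelSum [b] := by
          have : (b : ℚ) ≠ 0 := by linarith
          simp only [engelSum]
          field_simp
          ring
  | cons c l =>
    obtain ⟨hc, hcM⟩ := (List.forall_mem_cons.1 hl).1
    have hc' : (0 : ℚ) < c := by exact_mod_cast hc
    have hcM' : (c : ℚ) ≤ M := by exact_mod_cast hcM
    calc 1 / (M : ℚ) ^ 2 = 1 / M / M := by rw [div_div, sq]
      _ ≤ engelSum (c :: l) / a := by
          have : 1 / (M : ℚ) ≤ engelSum (c :: l) :=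
            (one_div_le_one_div_of_le hc' hcM').trans (one_div_le_engelSum_cons c l)
          gcongr
          · exact engelSum_nonneg _
          · linarith
      _ = engelSum (a :: c :: l) - 1 / a := by rw [engelSum_cons a]; ring
      _ ≤ engelSum (a :: c :: l) - engelSum (b :: l') := by
          gcongr
          exact (engelSum_cons_lt_one_div ha hab hl').le

theorem inv_pow_le_abs_engelSum_sub (hlen : l.length = l'.length) (hne : l ≠ l')
    (hsort : l.Pairwise (· ≤ ·)) (hsort' : l'.Pairwise (· ≤ ·))
    (hl : ∀ a ∈ l, 1 ≤ a ∧ a ≤ M) (hl' : ∀ a ∈ l', 1 ≤ a ∧ a ≤ M) :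
    1 / (M : ℚ) ^ (l.length + 1) ≤ |engelSum l - engelSum l'| := by
  induction l generalizing l' with
  | nil => exact absurd (List.length_eq_zero_iff.1 hlen.symm).symm hne
  | cons a l ih =>
    obtain ⟨b, l', rfl⟩ := List.exists_cons_of_length_eq_add_one hlen.symm
    simp only [List.length_cons, Nat.add_right_cancel_iff] at hlen
    rw [List.pairwise_cons] at hsort hsort'
    rw [List.forall_mem_cons] at hl hl'
    obtain ⟨⟨ha, haM⟩, hl⟩ := hl
    obtain ⟨⟨hb, hbM⟩, hl'⟩ := hl'
    have hM : (1 : ℚ) ≤ M := by exact_mod_cast ha.trans haM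
    have hpow : 1 / (M : ℚ) ^ (l.length + 1 + 1) ≤ 1 / M ^ 2 := by
      gcongr
      omega
    rcases lt_trichotomy a b with hab | rfl | hba
    · exact hpow.trans ((inv_sq_le_engelSum_cons_sub ha hab hbM hl hsort'.1 hlen).trans
        (le_abs_self _))
    · calc 1 / (M : ℚ) ^ (l.length + 1 + 1) = 1 / M ^ (l.length + 1) / M := by
            rw [pow_succ _ (l.length + 1), div_div]
        _ ≤ |engelSum l - engelSum l'| / a := by
            gcongr
            exact ih hlen (by simpa using hne) hsort.2 hsort'.2 hl hl'
        _ = |engelSum (a :: l) - engelSum (a :: l')| := by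
            rw [engelSum_cons, engelSum_cons, ← sub_div, add_sub_add_left_eq_sub, abs_div,
              Nat.abs_cast]
    · rw [abs_sub_comm]
      exact hpow.trans ((inv_sq_le_engelSum_cons_sub hb hba haM hl' hsort.1 hlen.symm).trans
        (le_abs_self _))

end EngelSum

section LowerBound

variable {m n : ℕ} {δ T : ℝ}

theorem choose_mul_le_volume_closedNbhd_AstarSet (hm : m ≠ 0)
    (hδ : 2 * δ < 1 / ((n + 1 : ℕ) : ℝ) ^ (m + 1)) :
    n.choose m * ENNReal.ofReal (2 * δ) ≤ volume (closedNbhd (AstarSet m) δ) := by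
  set s := (Finset.Icc 2 (n + 1)).powersetCard m
  have hcard : s.card = n.choose m := by simp [s]
  have hdigit {d : Finset ℕ} (hd : d ∈ s) : ∀ a ∈ d.sort, 2 ≤ a ∧ a ≤ n + 1 := fun a ha ↦
    Finset.mem_Icc.1 ((Finset.mem_powersetCard.1 hd).1 ((Finset.mem_sort _).1 ha))
  have hlen {d : Finset ℕ} (hd : d ∈ s) : d.sort.length = m :=
    (Finset.length_sort _).trans (Finset.mem_powersetCard.1 hd).2
  rw [← hcard]
  refine card_mul_le_volume_closedNbhd (f := fun d ↦ (engelSum d.sort : ℝ)) (fun d hd ↦ ?_)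
    fun d hd e he hde ↦ hδ.trans_le ?_
  · refine engelSum_mem_AstarSet ?_ (Finset.pairwise_sort _ _) (fun a ha ↦ (hdigit hd a ha).1)
      (hlen hd).le
    rw [← List.length_pos_iff, hlen hd]
    exact Nat.pos_of_ne_zero hm
  · have hne : d.sort ≠ e.sort := fun h ↦ hde <| by
      rw [← Finset.sort_toFinset d (· ≤ ·), h, Finset.sort_toFinset]
    have hsep := inv_pow_le_abs_engelSum_sub ((hlen hd).trans (hlen he).symm) hne
      (Finset.pairwise_sort _ _) (Finset.pairwise_sort _ _)
      (fun a ha ↦ ⟨one_le_two.trans (hdigit hd a ha).1, (hdigit hd a ha).2⟩)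
      (fun a ha ↦ ⟨one_le_two.trans (hdigit he a ha).1, (hdigit he a ha).2⟩)
    rw [hlen hd] at hsep
    simpa using (Rat.cast_le (K := ℝ)).2 hsep

theorem le_volume_closedNbhd_AstarSet_toReal (hm : m ≠ 0) (hT : 4 * (m + 2) ≤ T)
    (hδ : δ * T ^ (m + 1) = 1) :
    2 / (4 ^ m * m.factorial) * T⁻¹ ≤ (volume (closedNbhd (AstarSet m) δ)).toReal := by
  have hT0 : 0 < T := lt_of_lt_of_le (by positivity) hT
  have hδ0 : 0 < δ := pos_of_mul_pos_left (hδ ▸ one_pos) (by positivity)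
  set N := ⌊T / 4⌋₊
  have hN_le : (N : ℝ) ≤ T / 4 := Nat.floor_le (by positivity)
  have hN_ge : T / 4 ≤ (N + 1 : ℕ) := by
    push_cast
    exact (Nat.lt_floor_add_one _).le
  have hδT : δ * T ^ m = T⁻¹ :=
    eq_inv_of_mul_eq_one_left (by rw [mul_assoc, ← pow_succ, hδ])
  have hsep : 2 * δ < 1 / ((N + m + 1 : ℕ) : ℝ) ^ (m + 1) := by
    have hlt : ((N + m + 1 : ℕ) : ℝ) < T / 2 := by
      push_cast
      linarith
    rw [lt_div_iff₀ (by positivity)]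
    calc 2 * δ * ((N + m + 1 : ℕ) : ℝ) ^ (m + 1) < 2 * δ * (T / 2) ^ (m + 1) := by gcongr
      _ = (δ * T ^ (m + 1)) / 2 ^ m := by rw [div_pow, pow_succ 2]; field_simp
      _ ≤ 1 := by rw [hδ]; exact div_le_one_of_le₀ (one_le_pow₀ one_le_two) (by positivity)
  have hchoose : ((N + 1 : ℕ) : ℝ) ^ m / m.factorial ≤ (N + m).choose m := by
    simpa only [Nat.add_right_comm N m 1, Nat.add_sub_cancel] using
      Nat.pow_le_choose (α := ℝ) m (N + m)
  have hvol := ENNReal.toReal_mono (volume_closedNbhd_AstarSet_ne_top m δ)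
    (choose_mul_le_volume_closedNbhd_AstarSet hm hsep)
  rw [ENNReal.toReal_mul, ENNReal.toReal_natCast, ENNReal.toReal_ofReal (by positivity)] at hvol
  calc 2 / (4 ^ m * m.factorial) * T⁻¹ = (T / 4) ^ m / m.factorial * (2 * δ) := by
        rw [← hδT, div_pow]; field_simp
    _ ≤ (N + m).choose m * (2 * δ) := by
        gcongr
        exact hchoose.trans' (by gcongr)
    _ ≤ _ := hvol

end LowerBound

section Asymptotics

theorem exists_eventually_log_le_add_log_of_isBigO {α : Type*} {F : Filter α} {u v : α → ℝ}
    (huv : u =O[F] v) (hu : ∀ᶠ x in F, u x ≠ 0) :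
    ∃ K, ∀ᶠ x in F, Real.log (u x) ≤ K + Real.log (v x) := by
  obtain ⟨C, hC, hbound⟩ := huv.exists_pos
  refine ⟨Real.log C, ?_⟩
  filter_upwards [hu, hbound.bound, huv.eq_zero_imp] with x hux hle hzero
  rw [← Real.log_abs (u x), ← Real.log_abs (v x),
    ← Real.log_mul hC.ne' (abs_ne_zero.2 (mt hzero hux))]
  exact Real.log_le_log (abs_pos.2 hux) hle

theorem tendsto_log_div_self_atBot : Tendsto (fun x ↦ Real.log x / x) atBot (𝓝 0) := by
  have h := (Real.isLittleO_log_id_atTop.tendsto_div_nhds_zero.comp tendsto_neg_atBot_atTop).neg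
  simpa [Function.comp_def, div_neg] using h

theorem tendsto_log_div_log_of_isBigO {f : ℝ → ℝ} {s : ℝ} {k : ℕ}
    (hlower : (fun δ ↦ δ ^ s) =O[𝓝[>] 0] f)
    (hupper : f =O[𝓝[>] 0] fun δ ↦ δ ^ s * Real.log δ ^ k) :
    Tendsto (fun δ ↦ Real.log (f δ) / Real.log δ) (𝓝[>] 0) (𝓝 s) := by
  have hpos : ∀ᶠ δ : ℝ in 𝓝[>] 0, 0 < δ := self_mem_nhdsWithin
  have hpow : ∀ᶠ δ : ℝ in 𝓝[>] 0, δ ^ s ≠ 0 := hpos.mono fun δ hδ ↦ (Real.rpow_pos_of_pos hδ s).ne'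
  have hf : ∀ᶠ δ in 𝓝[>] 0, f δ ≠ 0 := by
    filter_upwards [hpow, hlower.eq_zero_imp] with δ hδ hzero using mt hzero hδ
  obtain ⟨K, hK⟩ := exists_eventually_log_le_add_log_of_isBigO hlower hpow
  obtain ⟨K', hK'⟩ := exists_eventually_log_le_add_log_of_isBigO hupper hf
  have hneg : ∀ᶠ δ : ℝ in 𝓝[>] 0, Real.log δ < 0 :=
    Real.tendsto_log_nhdsGT_zero.eventually_lt_atBot 0
  have hinv : Tendsto (fun δ ↦ (Real.log δ)⁻¹) (𝓝[>] 0) (𝓝 0) :=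
    tendsto_inv_atBot_zero.comp Real.tendsto_log_nhdsGT_zero
  have hloglog : Tendsto (fun δ ↦ Real.log (Real.log δ) / Real.log δ) (𝓝[>] 0) (𝓝 0) :=
    tendsto_log_div_self_atBot.comp Real.tendsto_log_nhdsGT_zero
  have hleft : Tendsto (fun δ ↦ s + K' * (Real.log δ)⁻¹ +
      k * (Real.log (Real.log δ) / Real.log δ)) (𝓝[>] 0) (𝓝 s) := by
    simpa using ((hinv.const_mul K').const_add s).add (hloglog.const_mul (k : ℝ))
  have hright : Tendsto (fun δ ↦ s - K * (Real.log δ)⁻¹) (𝓝[>] 0) (𝓝 s) := by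
    simpa using (hinv.const_mul K).const_sub s
  refine tendsto_of_tendsto_of_tendsto_of_le_of_le' hleft hright ?_ ?_
  · filter_upwards [hpos, hneg, hpow, hK'] with δ hδ hlog hδs hle
    rw [Real.log_mul hδs (pow_ne_zero k hlog.ne), Real.log_rpow hδ, Real.log_pow] at hle
    rw [le_div_iff_of_neg hlog]
    refine hle.trans_eq ?_
    field_simp [hlog.ne]
    ring
  · filter_upwards [hpos, hneg, hK] with δ hδ hlog hle
    rw [Real.log_rpow hδ] at hle
    rw [div_le_iff_of_neg hlog, sub_mul, inv_mul_cancel_right₀ hlog.ne]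
    linarith

theorem mul_rpow_neg_one_div_pow_succ {δ : ℝ} (hδ : 0 < δ) (m : ℕ) :
    δ * (δ ^ (-(1 / ((m : ℝ) + 1)))) ^ (m + 1) = 1 := by
  rw [← Real.rpow_mul_natCast hδ.le]
  push_cast
  rw [neg_mul, one_div_mul_cancel (by positivity), Real.rpow_neg_one, mul_inv_cancel₀ hδ.ne']

theorem rpow_isBigO_volume_closedNbhd_AstarSet {m : ℕ} (hm : m ≠ 0) :
    (fun δ : ℝ ↦ δ ^ (1 / ((m : ℝ) + 1))) =O[𝓝[>] 0]
      fun δ ↦ (volume (closedNbhd (AstarSet m) δ)).toReal := by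
  have hexp : -(1 / ((m : ℝ) + 1)) < 0 := neg_neg_of_pos (by positivity)
  refine IsBigO.of_bound (2 / (4 ^ m * m.factorial))⁻¹ ?_
  filter_upwards [self_mem_nhdsWithin,
    (tendsto_rpow_neg_nhdsGT_zero hexp).eventually_ge_atTop (4 * ((m : ℝ) + 2))]
    with δ (hδ : 0 < δ) hT
  have hlower := le_volume_closedNbhd_AstarSet_toReal hm hT (mul_rpow_neg_one_div_pow_succ hδ m)
  rw [Real.rpow_neg hδ.le, inv_inv] at hlower
  rw [Real.norm_of_nonneg (by positivity), Real.norm_of_nonneg ENNReal.toReal_nonneg]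
  exact (le_inv_mul_iff₀ (by positivity)).2 hlower

theorem volume_closedNbhd_AstarSet_isBigO (m : ℕ) :
    (fun δ ↦ (volume (closedNbhd (AstarSet m) δ)).toReal) =O[𝓝[>] 0]
      fun δ ↦ δ ^ (1 / ((m : ℝ) + 1)) * Real.log δ ^ m := by
  refine IsBigO.of_bound ((m + (m + 1) * 2 ^ (m + 1)) * 3 ^ m) ?_
  filter_upwards [self_mem_nhdsWithin,
    Real.tendsto_log_nhdsGT_zero.eventually_le_atBot (-1)] with δ (hδ : 0 < δ) hlog
  set p : ℝ := 1 / ((m : ℝ) + 1)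
  have hp1 : p ≤ 1 := div_le_one_of_le₀ (by linarith [m.cast_nonneg (α := ℝ)]) (by positivity)
  have hlogT : Real.log (δ ^ (-p)) = p * |Real.log δ| := by
    rw [Real.log_rpow hδ, abs_of_neg (by linarith)]
    ring
  have hL : 1 ≤ |Real.log δ| := by rw [abs_of_neg] <;> linarith
  have hT : 1 ≤ δ ^ (-p) := by
    rw [← Real.log_nonneg_iff (by positivity), hlogT]
    positivity
  calc ‖(volume (closedNbhd (AstarSet m) δ)).toReal‖
      ≤ (m + (m + 1) * 2 ^ (m + 1)) * (2 + p * |Real.log δ|) ^ m * δ ^ p := by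
        rw [Real.norm_of_nonneg ENNReal.toReal_nonneg, ← hlogT, ← inv_inv (δ ^ p),
          ← Real.rpow_neg hδ.le]
        exact volume_closedNbhd_AstarSet_toReal_le hT (mul_rpow_neg_one_div_pow_succ hδ m)
    _ ≤ (m + (m + 1) * 2 ^ (m + 1)) * (3 * |Real.log δ|) ^ m * δ ^ p := by
        gcongr
        nlinarith
    _ = _ := by
        rw [Real.norm_eq_abs, abs_mul, abs_pow, abs_of_pos (Real.rpow_pos_of_pos hδ p), mul_pow]
        ring

end Asymptotics

/-- The Minkowski dimension of `A_m^*` is `m/(m+1)`: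
`lim_{δ → 0⁺} log λ(V_δ(A_m^*)) / log δ = 1/(m+1)`. -/
theorem minkowski_dim_Astar (m : ℕ) (hm : 0 < m) :
    Tendsto (fun δ : ℝ => Real.log (volume (closedNbhd (AstarSet m) δ)).toReal / Real.log δ)
      (nhdsWithin (0 : ℝ) (Set.Ioi 0)) (nhds ((1 : ℝ) / (m + 1))) :=
  tendsto_log_div_log_of_isBigO (rpow_isBigO_volume_closedNbhd_AstarSet hm.ne')
    (volume_closedNbhd_AstarSet_isBigO m)
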